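/- Assume (A2)–(A4). Then for all ζ, ψ ∈ 𝒜(ℝⁿ), the operator H₂ defined by (H₂x)(t) = ∑_{j=-∞}^{t−1} X(t)P X(j+1)⁻¹ Λ(j,x) − ∑_{j=t}^{∞} X(t)(I−P) X(j+1)⁻¹ Λ(j,x), with Λ(j,x) = (A(j)−I)Q(j, x(j−g(j))) + G(j, x(j), x(j−g(j))), satisfies the Lipschitz estimate ‖H₂ζ − H₂ψ‖_∞ ≤ [(‖A‖+1)E₁ + 2E₂]·‖ζ − ψ‖_∞·(β₁(1+α₁)/α₁ + β₂/α₂), where ‖A‖ = sup_{t∈ℤ} |A(t)| with |A(t)| the maximum absolute row sum of A(t). In particular H₂ : 𝒜(ℝⁿ) → 𝒜(ℝⁿ) is continuous. -/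

import Mathlib

open Filter Topology

/-- A function `f : ℤ → 𝕏` is discrete almost automorphic if for every sequence of
integers there exist a subsequence `(k_n)` and a function `f̄` such that
`f(t + k_n) → f̄(t)` and `f̄(t − k_n) → f(t)` pointwise in `t`. -/
def DiscreteAlmostAutomorphic {𝕏 : Type*} [TopologicalSpace 𝕏] (f : ℤ → 𝕏) : Prop :=
  ∀ k' : ℕ → ℤ, ∃ (σ : ℕ → ℕ) (fbar : ℤ → 𝕏), StrictMono σ ∧
    (∀ t : ℤ, Tendsto (fun n => f (t + k' (σ n))) atTop (𝓝 (fbar t))) ∧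
    (∀ t : ℤ, Tendsto (fun n => fbar (t - k' (σ n))) atTop (𝓝 (f t)))

/-- `Λ(j,x) = (A(j) − I) Q(j, x(j − g(j))) + G(j, x(j), x(j − g(j)))`. -/
noncomputable def Lam {n : ℕ} (A : ℤ → (Fin n → ℝ) →L[ℝ] (Fin n → ℝ))
    (g : ℤ → ℤ) (Q : ℤ → (Fin n → ℝ) → Fin n → ℝ)
    (G : ℤ → (Fin n → ℝ) → (Fin n → ℝ) → Fin n → ℝ)
    (x : ℤ → Fin n → ℝ) (j : ℤ) : Fin n → ℝ :=
  (A j - 1) (Q j (x (j - g j))) + G j (x j) (x (j - g j))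

/-- `(H₂x)(t) = ∑_{j=-∞}^{t−1} X(t) P X(j+1)⁻¹ Λ(j,x) − ∑_{j=t}^{∞} X(t)(I−P) X(j+1)⁻¹ Λ(j,x)`,
the sums being reindexed over `ℕ` via `j = t − 1 − m` and `j = t + m` respectively. -/
noncomputable def H2map {n : ℕ} (A X Xinv : ℤ → (Fin n → ℝ) →L[ℝ] (Fin n → ℝ))
    (P : (Fin n → ℝ) →L[ℝ] (Fin n → ℝ)) (g : ℤ → ℤ)
    (Q : ℤ → (Fin n → ℝ) → Fin n → ℝ)
    (G : ℤ → (Fin n → ℝ) → (Fin n → ℝ) → Fin n → ℝ)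
    (x : ℤ → Fin n → ℝ) (t : ℤ) : Fin n → ℝ :=
  (∑' m : ℕ, (X t * P * Xinv (t - (m : ℤ))) (Lam A g Q G x (t - 1 - (m : ℤ))))
    - ∑' m : ℕ, (X t * (1 - P) * Xinv (t + (m : ℤ) + 1)) (Lam A g Q G x (t + (m : ℤ)))

/-! A bound `‖Λ(j, ζ) - Λ(j, ψ)‖ ≤ K` uniform in `j` follows from the Lipschitz conditions, and each
half of `H₂` multiplies such a bound by the sum of a geometric series: `∑ (1 + α₁) ^ (-m)` over
`m ≥ 0` for the past, which includes the term at lag zero, and `∑ (1 + α₂) ^ (-(m + 1))` for the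
future, which does not. -/

section Series

variable {ι E : Type*} [NormedAddCommGroup E] [CompleteSpace E]

-- If one of the two series diverges then so does the other, and both `tsum`s are `0`.
theorem norm_tsum_sub_tsum_le_of_norm_sub_le {f h : ι → E} {c : ι → ℝ} {a : ℝ} (hc : HasSum c a)
    (hfh : ∀ i, ‖f i - h i‖ ≤ c i) : ‖∑' i, f i - ∑' i, h i‖ ≤ a := by
  have hsub : Summable fun i => f i - h i := .of_norm_bounded hc.summable hfh
  by_cases hh : Summable h
  · have hf : Summable f := (summable_iff_of_summable_sub hsub).mpr hh
    rw [← hf.tsum_sub hh]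
    exact tsum_of_norm_bounded hc hfh
  · have hf : ¬Summable f := mt (summable_iff_of_summable_sub hsub).mp hh
    rw [tsum_eq_zero_of_not_summable hf, tsum_eq_zero_of_not_summable hh, sub_zero, norm_zero]
    exact hc.nonneg fun i => (norm_nonneg _).trans (hfh i)

theorem norm_tsum_apply_sub_tsum_apply_le {𝕜 F : Type*} [NontriviallyNormedField 𝕜]
    [NormedSpace 𝕜 E] [NormedAddCommGroup F] [NormedSpace 𝕜 F] {T : ι → F →L[𝕜] E} {f h : ι → F}
    {c : ι → ℝ} {a K : ℝ} (hc : HasSum c a) (hT : ∀ i, ‖T i‖ ≤ c i)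
    (hfh : ∀ i, ‖f i - h i‖ ≤ K) : ‖∑' i, T i (f i) - ∑' i, T i (h i)‖ ≤ a * K := by
  refine norm_tsum_sub_tsum_le_of_norm_sub_le (hc.mul_right K) fun i => ?_
  rw [← map_sub]
  exact (T i).le_of_opNorm_le_of_le (hT i) (hfh i)

end Series

theorem hasSum_one_add_zpow_neg {α : ℝ} (hα : 0 < α) :
    HasSum (fun m : ℕ => (1 + α) ^ (-(m : ℤ))) ((1 + α) / α) := by
  have hsum := hasSum_geometric_of_lt_one (by positivity) (inv_lt_one_of_one_lt₀ (by linarith))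
    (r := (1 + α)⁻¹)
  have hlimit : (1 - (1 + α)⁻¹)⁻¹ = (1 + α) / α := by
    rw [← inv_div, inv_inj]
    field_simp
    ring
  simpa only [hlimit, inv_pow, zpow_neg, zpow_natCast] using hsum

theorem hasSum_one_add_zpow_neg_succ {α : ℝ} (hα : 0 < α) :
    HasSum (fun m : ℕ => (1 + α) ^ (-(m + 1 : ℤ))) α⁻¹ := by
  have hbase : 1 + α ≠ 0 := by positivity
  have hsum := (hasSum_one_add_zpow_neg hα).mul_right (1 + α)⁻¹
  have hlimit : (1 + α) / α * (1 + α)⁻¹ = α⁻¹ := by field_simp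
  simpa only [hlimit, neg_add, zpow_add₀ hbase, zpow_neg_one] using hsum

section Green

variable {𝕜 E F : Type*} [NontriviallyNormedField 𝕜] [NormedAddCommGroup E] [NormedSpace 𝕜 E]
  [NormedAddCommGroup F] [NormedSpace 𝕜 F]

/-- The Green operator `f ↦ ∑_{j<t} S(t, j+1) f(j) - ∑_{j≥t} U(t, j+1) f(j)` of a dichotomy with
stable kernel `S` and unstable kernel `U`; for a fundamental matrix `X` and projection `P` these are
`S(t, s) = X(t) P X(s)⁻¹` and `U(t, s) = X(t) (I - P) X(s)⁻¹`. The sums run over `m : ℕ`, with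
`j = t - 1 - m` and `j = t + m`. -/
noncomputable def greenOperator (S U : ℤ → ℤ → F →L[𝕜] E) (f : ℤ → F) (t : ℤ) : E :=
  ∑' m : ℕ, S t (t - m) (f (t - 1 - m)) - ∑' m : ℕ, U t (t + m + 1) (f (t + m))

theorem norm_greenOperator_sub_le [CompleteSpace E] {S U : ℤ → ℤ → F →L[𝕜] E} {α₁ α₂ β₁ β₂ : ℝ}
    (hα₁ : 0 < α₁) (hα₂ : 0 < α₂)
    (hS : ∀ s t : ℤ, s ≤ t → ‖S t s‖ ≤ β₁ * (1 + α₁) ^ (s - t))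
    (hU : ∀ s t : ℤ, t ≤ s → ‖U t s‖ ≤ β₂ * (1 + α₂) ^ (t - s))
    {f h : ℤ → F} {K : ℝ} (hfh : ∀ j, ‖f j - h j‖ ≤ K) (t : ℤ) :
    ‖greenOperator S U f t - greenOperator S U h t‖ ≤
      K * (β₁ * (1 + α₁) / α₁ + β₂ / α₂) := by
  have hS_lag (m : ℕ) : ‖S t (t - m)‖ ≤ β₁ * (1 + α₁) ^ (-(m : ℤ)) := by
    simpa only [sub_sub_cancel_left] using hS (t - m) t (by lia)
  have hU_lag (m : ℕ) : ‖U t (t + m + 1)‖ ≤ β₂ * (1 + α₂) ^ (-(m + 1 : ℤ)) := by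
    simpa only [add_assoc, sub_add_cancel_left] using hU (t + m + 1) t (by lia)
  have hpast := norm_tsum_apply_sub_tsum_apply_le ((hasSum_one_add_zpow_neg hα₁).mul_left β₁)
    hS_lag fun m => hfh (t - 1 - m)
  have hfuture := norm_tsum_apply_sub_tsum_apply_le
    ((hasSum_one_add_zpow_neg_succ hα₂).mul_left β₂) hU_lag fun m => hfh (t + m)
  rw [greenOperator, greenOperator, sub_sub_sub_comm]
  calc
    _ ≤ β₁ * ((1 + α₁) / α₁) * K + β₂ * α₂⁻¹ * K := norm_sub_le_of_le hpast hfuture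
    _ = K * (β₁ * (1 + α₁) / α₁ + β₂ / α₂) := by ring

end Green

section NeutralForcing

variable {𝕜 E : Type*} [NontriviallyNormedField 𝕜] [NormedAddCommGroup E] [NormedSpace 𝕜 E]

/-- The forcing term `Λ(j, x) = (A(j) - I) Q(j, x(j - g(j))) + G(j, x(j), x(j - g(j)))` that a
neutral delay equation adds to its linear part `x(t + 1) = A(t) x(t)`, in a normed space `E`. -/
def neutralForcing (A : ℤ → E →L[𝕜] E) (g : ℤ → ℤ) (Q : ℤ → E → E) (G : ℤ → E → E → E)
    (x : ℤ → E) (j : ℤ) : E :=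
  (A j - 1) (Q j (x (j - g j))) + G j (x j) (x (j - g j))

variable {A : ℤ → E →L[𝕜] E} {Q : ℤ → E → E} {G : ℤ → E → E → E} {a E₁ E₂ C : ℝ} {ζ ψ : ℤ → E}

theorem norm_neutralForcing_sub_le (hA : ∀ j, ‖A j‖ ≤ a) (g : ℤ → ℤ) (hE₁ : 0 ≤ E₁) (hE₂ : 0 ≤ E₂)
    (hQ : ∀ t u v, ‖Q t u - Q t v‖ ≤ E₁ * ‖u - v‖)
    (hG : ∀ t u v w z, ‖G t u w - G t v z‖ ≤ E₂ * (‖u - v‖ + ‖w - z‖))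
    (hC : ∀ s, ‖ζ s - ψ s‖ ≤ C) (j : ℤ) :
    ‖neutralForcing A g Q G ζ j - neutralForcing A g Q G ψ j‖ ≤
      ((a + 1) * E₁ + 2 * E₂) * C := by
  have hA_sub_one : ‖A j - 1‖ ≤ a + 1 := norm_sub_le_of_le (hA j) ContinuousLinearMap.norm_id_le
  have hQ_sub : ‖Q j (ζ (j - g j)) - Q j (ψ (j - g j))‖ ≤ E₁ * C :=
    (hQ _ _ _).trans (by gcongr; exact hC _)
  have hG_sub : ‖G j (ζ j) (ζ (j - g j)) - G j (ψ j) (ψ (j - g j))‖ ≤ E₂ * (C + C) :=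
    (hG _ _ _ _ _).trans (by gcongr <;> exact hC _)
  rw [neutralForcing, neutralForcing, add_sub_add_comm, ← map_sub]
  calc
    _ ≤ (a + 1) * (E₁ * C) + E₂ * (C + C) :=
      norm_add_le_of_le ((A j - 1).le_of_opNorm_le_of_le hA_sub_one hQ_sub) hG_sub
    _ = ((a + 1) * E₁ + 2 * E₂) * C := by ring

theorem stmt_11_general [CompleteSpace E] {S U : ℤ → ℤ → E →L[𝕜] E} {α₁ α₂ β₁ β₂ : ℝ}
    (hA : ∀ j, ‖A j‖ ≤ a) (g : ℤ → ℤ) (hE₁ : 0 ≤ E₁) (hE₂ : 0 ≤ E₂)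
    (hQ : ∀ t u v, ‖Q t u - Q t v‖ ≤ E₁ * ‖u - v‖)
    (hG : ∀ t u v w z, ‖G t u w - G t v z‖ ≤ E₂ * (‖u - v‖ + ‖w - z‖))
    (hα₁ : 0 < α₁) (hα₂ : 0 < α₂)
    (hS : ∀ s t : ℤ, s ≤ t → ‖S t s‖ ≤ β₁ * (1 + α₁) ^ (s - t))
    (hU : ∀ s t : ℤ, t ≤ s → ‖U t s‖ ≤ β₂ * (1 + α₂) ^ (t - s))
    (hC : ∀ s, ‖ζ s - ψ s‖ ≤ C) (t : ℤ) :
    ‖greenOperator S U (neutralForcing A g Q G ζ) t -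
        greenOperator S U (neutralForcing A g Q G ψ) t‖ ≤
      ((a + 1) * E₁ + 2 * E₂) * C * (β₁ * (1 + α₁) / α₁ + β₂ / α₂) :=
  norm_greenOperator_sub_le hα₁ hα₂ hS hU
    (norm_neutralForcing_sub_le hA g hE₁ hE₂ hQ hG hC) t

end NeutralForcing

/-- Under (A2)–(A4), the operator `H₂` satisfies the Lipschitz estimate
`‖H₂ζ − H₂ψ‖_∞ ≤ [(‖A‖+1)E₁ + 2E₂]·‖ζ − ψ‖_∞·(β₁(1+α₁)/α₁ + β₂/α₂)`, where
`‖A‖ = sup_t ‖A(t)‖`; in particular `H₂ : 𝒜(ℝⁿ) → 𝒜(ℝⁿ)` is continuous. -/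
theorem stmt_11 {n : ℕ}
    (A X Xinv : ℤ → (Fin n → ℝ) →L[ℝ] (Fin n → ℝ)) (t₀ : ℤ)
    (hAbdd : BddAbove (Set.range fun t : ℤ => ‖A t‖))
    (g : ℤ → ℤ) (hg0 : ∀ t : ℤ, 0 ≤ g t)
    (Q : ℤ → (Fin n → ℝ) → Fin n → ℝ)
    (G : ℤ → (Fin n → ℝ) → (Fin n → ℝ) → Fin n → ℝ)
    (E₁ E₂ : ℝ) (hE₁ : 0 < E₁) (hE₂ : 0 < E₂)
    -- (A2)
    (hQ_lip : ∀ (t : ℤ) (u v : Fin n → ℝ), ‖Q t u - Q t v‖ ≤ E₁ * ‖u - v‖)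
    -- (A3)
    (hG_lip : ∀ (t : ℤ) (u v w z : Fin n → ℝ),
      ‖G t u w - G t v z‖ ≤ E₂ * (‖u - v‖ + ‖w - z‖))
    -- (A4): exponential dichotomy
    (hX : ∀ t : ℤ, X (t + 1) = A t * X t) (hX0 : X t₀ = 1)
    (hXinv : ∀ t : ℤ, X t * Xinv t = 1) (hXinv' : ∀ t : ℤ, Xinv t * X t = 1)
    (P : (Fin n → ℝ) →L[ℝ] (Fin n → ℝ)) (hP : P * P = P)
    (α₁ α₂ β₁ β₂ : ℝ) (hα₁ : 0 < α₁) (hα₂ : 0 < α₂) (hβ₁ : 0 < β₁) (hβ₂ : 0 < β₂)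
    (hd₁ : ∀ s t : ℤ, s ≤ t → ‖X t * P * Xinv s‖ ≤ β₁ * (1 + α₁) ^ (s - t))
    (hd₂ : ∀ s t : ℤ, t ≤ s → ‖X t * (1 - P) * Xinv s‖ ≤ β₂ * (1 + α₂) ^ (t - s))
    (ζ ψ : ℤ → Fin n → ℝ)
    (hζ : DiscreteAlmostAutomorphic ζ) (hψ : DiscreteAlmostAutomorphic ψ)
    (C : ℝ) (hC : ∀ s : ℤ, ‖ζ s - ψ s‖ ≤ C) :
    ∀ t : ℤ, ‖H2map A X Xinv P g Q G ζ t - H2map A X Xinv P g Q G ψ t‖ ≤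
      (((⨆ s : ℤ, ‖A s‖) + 1) * E₁ + 2 * E₂) * C *
        (β₁ * (1 + α₁) / α₁ + β₂ / α₂) :=
  stmt_11_general (S := fun t s => X t * P * Xinv s) (U := fun t s => X t * (1 - P) * Xinv s)
    (le_ciSup hAbdd) g hE₁.le hE₂.le hQ_lip hG_lip hα₁ hα₂ hd₁ hd₂ hC
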